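/- arXiv:2402.14319 — 2 statements merged into one kernel-verified Lean document; each statement's English description precedes it below -/
import Mathlib

section
/- Let n ≥ 1, let q₁, q₂ ∈ [1,∞] with 1 = 1/q₁ + 1/q₂, let α₁, α₂ ≥ 0, and set α = α₁/q₁ + α₂/q₂. Then for all locally integrable f₁, f₂ on ℝ^n and all ρ > 0, |||f₁ f₂|||_{1,α;ρ} ≤ |||f₁|||_{q₁,α₁;ρ} · |||f₂|||_{q₂,α₂;ρ}. -/
open MeasureTheory Real Set ENNReal

noncomputable def logFac (s : ℝ) : ℝ := Real.log (Real.exp 1 + 1 / s)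

/-- The weak Zygmund type norm `‖f‖_{𝔏^{q,∞}(log 𝔏)^α}` for an exponent
`q ∈ [1,∞]`; for `q = ∞` it is the `L^∞` norm. -/
noncomputable def zygNormE (n : ℕ) (q : ℝ≥0∞) (α : ℝ)
    (f : EuclideanSpace ℝ (Fin n) → ℝ) : ℝ≥0∞ :=
  if q = ⊤ then eLpNorm f ⊤ volume
  else
    ⨆ s : Set.Ioi (0 : ℝ),
      (ENNReal.ofReal (logFac s.1) ^ α *
        ⨆ E : {E : Set (EuclideanSpace ℝ (Fin n)) //
            MeasurableSet E ∧ volume E = ENNReal.ofReal s.1},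
          ∫⁻ x in E.1, ENNReal.ofReal (|f x| ^ q.toReal)) ^ (1 / q.toReal)

/-- The uniformly local weak Zygmund type norm `|||f|||_{q,α;ρ}`. -/
noncomputable def zygNormULE (n : ℕ) (q : ℝ≥0∞) (α ρ : ℝ)
    (f : EuclideanSpace ℝ (Fin n) → ℝ) : ℝ≥0∞ :=
  ⨆ z : EuclideanSpace ℝ (Fin n),
    zygNormE n q α ((Metric.ball z ρ).indicator f)

lemma logFac_pos {s : ℝ} (hs : 0 < s) : 0 < logFac s := by
  unfold logFac
  apply Real.log_pos
  have h1 : (1:ℝ) < Real.exp 1 := by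
    have := Real.add_one_lt_exp (x := 1) one_ne_zero
    linarith
  have : 0 < 1 / s := by positivity
  linarith

lemma zyg_one_le (n : ℕ) (α : ℝ) (f : EuclideanSpace ℝ (Fin n) → ℝ) (C : ℝ≥0∞)
    (h : ∀ s : ℝ, 0 < s → ∀ E : Set (EuclideanSpace ℝ (Fin n)), MeasurableSet E →
      volume E = ENNReal.ofReal s →
      ENNReal.ofReal (logFac s) ^ α * ∫⁻ x in E, ENNReal.ofReal |f x| ≤ C) :
    zygNormE n 1 α f ≤ C := by
  unfold zygNormE
  rw [if_neg ENNReal.one_ne_top]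
  refine iSup_le fun s => ?_
  simp only [ENNReal.toReal_one, div_one, ENNReal.rpow_one, Real.rpow_one]
  rw [ENNReal.mul_iSup]
  exact iSup_le fun E => h s.1 s.2 E.1 E.2.1 E.2.2

lemma le_zyg (n : ℕ) (q : ℝ≥0∞) (hq : q ≠ ⊤) (α : ℝ) (f : EuclideanSpace ℝ (Fin n) → ℝ)
    (s : ℝ) (hs : 0 < s) (E : Set (EuclideanSpace ℝ (Fin n))) (hE : MeasurableSet E)
    (hv : volume E = ENNReal.ofReal s) :
    (ENNReal.ofReal (logFac s) ^ α *
      ∫⁻ x in E, ENNReal.ofReal (|f x| ^ q.toReal)) ^ (1 / q.toReal) ≤ zygNormE n q α f := by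
  unfold zygNormE
  rw [if_neg hq]
  refine le_trans ?_ (le_iSup _ (⟨s, hs⟩ : Set.Ioi (0:ℝ)))
  refine ENNReal.rpow_le_rpow ?_ (by positivity)
  refine mul_le_mul_right ?_ _
  exact le_iSup (fun E : {E : Set (EuclideanSpace ℝ (Fin n)) //
            MeasurableSet E ∧ volume E = ENNReal.ofReal s} =>
          ∫⁻ x in E.1, ENNReal.ofReal (|f x| ^ q.toReal)) ⟨E, hE, hv⟩

lemma zyg_top_case (n : ℕ) (α : ℝ) (α' : ℝ) (f g : EuclideanSpace ℝ (Fin n) → ℝ)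
    (hg : AEMeasurable g volume) :
    zygNormE n 1 α (fun x => f x * g x) ≤ zygNormE n ⊤ α' f * zygNormE n 1 α g := by
  apply zyg_one_le
  intro s hs E hE hv
  have h1 := le_zyg n 1 ENNReal.one_ne_top α g s hs E hE hv
  simp only [ENNReal.toReal_one, div_one, ENNReal.rpow_one, Real.rpow_one] at h1
  refine le_trans ?_ (mul_le_mul_right h1 _)
  rw [mul_left_comm]
  refine mul_le_mul_right ?_ _
  have h2 : zygNormE n ⊤ α' f = eLpNormEssSup f volume := by
    unfold zygNormE; simp
  rw [h2, ← lintegral_const_mul'' _ hg.abs.ennreal_ofReal.restrict]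
  refine lintegral_mono_ae ?_
  filter_upwards [ae_restrict_of_ae (ae_le_eLpNormEssSup (f := f) (μ := volume))] with x hx
  rw [abs_mul, ENNReal.ofReal_mul (abs_nonneg _)]
  refine mul_le_mul_left ?_ _
  rwa [← Real.norm_eq_abs, ofReal_norm_eq_enorm]

lemma zyg_holder (n : ℕ) (q₁ q₂ : ℝ≥0∞)
    (hq : q₁⁻¹ + q₂⁻¹ = 1) (α₁ α₂ : ℝ)
    (α : ℝ) (hα : α = α₁ * q₁⁻¹.toReal + α₂ * q₂⁻¹.toReal)
    (f g : EuclideanSpace ℝ (Fin n) → ℝ)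
    (hf : AEMeasurable f volume) (hg : AEMeasurable g volume) :
    zygNormE n 1 α (fun x => f x * g x) ≤ zygNormE n q₁ α₁ f * zygNormE n q₂ α₂ g := by
  by_cases ht₁ : q₁ = ⊤
  · subst ht₁
    have : q₂ = 1 := by simpa using hq
    subst this
    have : α = α₂ := by simpa using hα
    subst this
    exact zyg_top_case n α α₁ f g hg
  by_cases ht₂ : q₂ = ⊤
  · subst ht₂
    have : q₁ = 1 := by simpa using hq
    subst this
    have : α = α₁ := by simpa using hα
    subst this
    have := zyg_top_case n α α₂ g f hf
    rw [mul_comm (zygNormE _ _ _ _)]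
    simpa only [mul_comm (f _)] using this
  have hz₁ : q₁ ≠ 0 := by rintro rfl; simp at hq
  have hz₂ : q₂ ≠ 0 := by rintro rfl; simp at hq
  have hp₁ := ENNReal.toReal_pos hz₁ ht₁
  have hp₂ := ENNReal.toReal_pos hz₂ ht₂
  have hr : q₁.toReal⁻¹ + q₂.toReal⁻¹ = 1 := by
    rw [← ENNReal.toReal_inv, ← ENNReal.toReal_inv, ← ENNReal.toReal_add (by simpa) (by simpa), hq,
      ENNReal.toReal_one]
  have hc : q₁.toReal.HolderConjugate q₂.toReal := by
    constructor
    · simpa using hr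
    · exact hp₁
    · exact hp₂
  apply zyg_one_le
  intro s hs E hE hv
  have b₁ := le_zyg n q₁ ht₁ α₁ f s hs E hE hv
  have b₂ := le_zyg n q₂ ht₂ α₂ g s hs E hE hv
  refine le_trans ?_ (mul_le_mul' b₁ b₂)
  have hL0 : ENNReal.ofReal (logFac s) ≠ 0 := by simpa using logFac_pos hs
  have hH := ENNReal.lintegral_mul_le_Lp_mul_Lq (volume.restrict E) hc
    (hf.abs.ennreal_ofReal.restrict (s := E)) (hg.abs.ennreal_ofReal.restrict (s := E))
  rw [ENNReal.mul_rpow_of_nonneg _ _ (by positivity), ENNReal.mul_rpow_of_nonneg _ _ (by positivity),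
    mul_mul_mul_comm, ← ENNReal.rpow_mul, ← ENNReal.rpow_mul,
    ← ENNReal.rpow_add _ _ hL0 ENNReal.ofReal_ne_top]
  rw [ENNReal.toReal_inv, ENNReal.toReal_inv] at hα
  simp only [one_div] at hH ⊢
  rw [← hα]
  refine mul_le_mul_right ?_ _
  simp only [abs_mul, ENNReal.ofReal_mul (abs_nonneg _),
    ← ENNReal.ofReal_rpow_of_nonneg (abs_nonneg _) hp₁.le,
    ← ENNReal.ofReal_rpow_of_nonneg (abs_nonneg _) hp₂.le]
  exact hH



theorem stmt8 (n : ℕ) (hn : 1 ≤ n) (q₁ q₂ : ℝ≥0∞) (hq₁ : 1 ≤ q₁) (hq₂ : 1 ≤ q₂)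
    (hq : q₁⁻¹ + q₂⁻¹ = 1) (α₁ α₂ : ℝ) (hα₁ : 0 ≤ α₁) (hα₂ : 0 ≤ α₂)
    (α : ℝ) (hα : α = α₁ * q₁⁻¹.toReal + α₂ * q₂⁻¹.toReal)
    (f₁ f₂ : EuclideanSpace ℝ (Fin n) → ℝ)
    (h₁ : LocallyIntegrable f₁ volume) (h₂ : LocallyIntegrable f₂ volume)
    (ρ : ℝ) (hρ : 0 < ρ) :
    zygNormULE n 1 α ρ (fun x => f₁ x * f₂ x) ≤
      zygNormULE n q₁ α₁ ρ f₁ * zygNormULE n q₂ α₂ ρ f₂ := by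

  unfold zygNormULE
  refine iSup_le fun z => ?_
  have m₁ := h₁.aestronglyMeasurable.aemeasurable.indicator (Metric.isOpen_ball (x := z) (ε := ρ)).measurableSet
  have m₂ := h₂.aestronglyMeasurable.aemeasurable.indicator (Metric.isOpen_ball (x := z) (ε := ρ)).measurableSet
  have := zyg_holder n q₁ q₂ hq α₁ α₂ α hα _ _ m₁ m₂
  rw [Set.indicator_mul]
  exact this.trans (mul_le_mul' (le_iSup (fun z => zygNormE n q₁ α₁ ((Metric.ball z ρ).indicator f₁)) z)
    (le_iSup (fun z => zygNormE n q₂ α₂ ((Metric.ball z ρ).indicator f₂)) z))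
end

section
/- Let n ≥ 1, q ∈ [1,∞), and α ≥ 0. Then for every locally integrable f on ℝ^n: (i) ‖f‖_{𝔏^{q,∞}(log 𝔏)^α} ≤ ‖f‖_{L^q(log L)^α}; (ii) ‖f‖_{L^{q,∞}(log L)^α} ≤ ‖f‖_{𝔏^{q,∞}(log 𝔏)^α}. Moreover, if α > 0 both inclusions are strict: there exists a locally integrable f with ‖f‖_{𝔏^{q,∞}(log 𝔏)^α} < ∞ but ‖f‖_{L^q(log L)^α} = ∞, and there exists a locally integrable g with ‖g‖_{L^{q,∞}(log L)^α} < ∞ but ‖g‖_{𝔏^{q,∞}(log 𝔏)^α} = ∞. -/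
open MeasureTheory Real Set ENNReal

noncomputable def zygNorm (n : ℕ) (q α : ℝ)
    (f : EuclideanSpace ℝ (Fin n) → ℝ) : ℝ≥0∞ :=
  ⨆ s : Set.Ioi (0 : ℝ),
    (ENNReal.ofReal (logFac s.1) ^ α *
      ⨆ E : {E : Set (EuclideanSpace ℝ (Fin n)) //
          MeasurableSet E ∧ volume E = ENNReal.ofReal s.1},
        ∫⁻ x in E.1, ENNReal.ofReal (|f x| ^ q)) ^ (1 / q)

/-- The non-increasing rearrangement of `f` (with the convention `inf ∅ = ∞`). -/
noncomputable def rearr (n : ℕ) (f : EuclideanSpace ℝ (Fin n) → ℝ) (s : ℝ) : ℝ≥0∞ :=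
  sInf {l : ℝ≥0∞ | volume {x | l < ENNReal.ofReal |f x|} ≤ ENNReal.ofReal s}

/-- The Zygmund norm `‖f‖_{L^q(log L)^α}`. -/
noncomputable def zygmundNorm (n : ℕ) (q α : ℝ)
    (f : EuclideanSpace ℝ (Fin n) → ℝ) : ℝ≥0∞ :=
  (∫⁻ s in Set.Ioi (0 : ℝ),
    ENNReal.ofReal (logFac s) ^ α * rearr n f s ^ q) ^ (1 / q)

/-- The weak Zygmund norm `‖f‖_{L^{q,∞}(log L)^α}`. -/
noncomputable def weakZygNorm (n : ℕ) (q α : ℝ)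
    (f : EuclideanSpace ℝ (Fin n) → ℝ) : ℝ≥0∞ :=
  ⨆ s : Set.Ioi (0 : ℝ),
    (ENNReal.ofReal (logFac s.1) ^ α * ENNReal.ofReal s.1 * rearr n f s.1 ^ q) ^ (1 / q)

lemma rearr_antitone (n : ℕ) (f : EuclideanSpace ℝ (Fin n) → ℝ) : Antitone (rearr n f) := by
  intro s t hst
  apply sInf_le_sInf
  intro l hl
  exact le_trans hl (ENNReal.ofReal_le_ofReal hst)

lemma le_rearr {n : ℕ} {f : EuclideanSpace ℝ (Fin n) → ℝ} {t : ℝ} {b : ℝ≥0∞}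
    (h : ∀ l < b, ENNReal.ofReal t < volume {x | l < ENNReal.ofReal |f x|}) : b ≤ rearr n f t := by
  apply le_sInf
  intro l hl
  by_contra hlt
  exact absurd hl (not_le.2 (h l (not_le.1 hlt)))

lemma HL {n : ℕ} {q : ℝ} (hq : 1 ≤ q) {f : EuclideanSpace ℝ (Fin n) → ℝ}
    (hf : AEMeasurable f volume) {s : ℝ} (hs : 0 < s) {E : Set (EuclideanSpace ℝ (Fin n))}
    (hEv : volume E = ENNReal.ofReal s) :
    ∫⁻ x in E, ENNReal.ofReal (|f x| ^ q) ≤ ∫⁻ t in Ioo 0 s, rearr n f t ^ q := by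
  have hq0 : 0 < q := by linarith
  by_cases hT : ∃ t0 > 0, rearr n f t0 = ⊤
  · obtain ⟨t0, ht0, h⟩ := hT
    have : ∫⁻ t in Ioo 0 s, rearr n f t ^ q = ⊤ := by
      rw [eq_top_iff]
      calc (⊤ : ℝ≥0∞) = ∫⁻ t in Ioo 0 (min s t0), ⊤ := by
            rw [setLIntegral_const, Real.volume_Ioo, ENNReal.top_mul]
            simp [hs, ht0]
        _ ≤ ∫⁻ t in Ioo 0 (min s t0), rearr n f t ^ q := by
            apply setLIntegral_mono' measurableSet_Ioo
            intro t ht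
            have : rearr n f t = ⊤ := by
              rw [eq_top_iff, ← h]
              exact rearr_antitone n f (ht.2.le.trans (min_le_right _ _))
            rw [this, ENNReal.top_rpow_of_pos hq0]
        _ ≤ _ := lintegral_mono_set (Ioo_subset_Ioo_right (min_le_left _ _))
    rw [this]; exact le_top
  · push Not at hT
    have hr : ∫⁻ t in Ioo 0 s, rearr n f t ^ q
        = ∫⁻ t in Ioo 0 s, ENNReal.ofReal ((rearr n f t).toReal ^ q) := by
      apply setLIntegral_congr_fun measurableSet_Ioo
      intro t ht
      simp only
      rw [← ENNReal.ofReal_rpow_of_nonneg ENNReal.toReal_nonneg hq0.le,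
        ENNReal.ofReal_toReal (hT t ht.1)]
    rw [hr, lintegral_eq_lintegral_meas_lt _ (Filter.Eventually.of_forall fun x => by positivity)
      ((hf.abs.pow_const q).restrict),
      lintegral_eq_lintegral_meas_le _ (Filter.Eventually.of_forall fun x => by positivity)
      (((rearr_antitone n f).measurable.ennreal_toReal.pow_const q).aemeasurable)]
    apply setLIntegral_mono' measurableSet_Ioi
    intro l hl
    have hl : 0 < l := hl
    have h1 : (volume.restrict E) {x | l < |f x| ^ q} ≤ ENNReal.ofReal s := by
      rw [← hEv]; exact (measure_mono (subset_univ _)).trans (Measure.restrict_apply_univ E).le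
    have h2 : (volume.restrict E) {x | l < |f x| ^ q} ≤ volume {x | l < |f x| ^ q} :=
      Measure.restrict_le_self _
    set m := (volume.restrict E) {x | l < |f x| ^ q}
    have hm : m ≠ ⊤ := (h1.trans_lt ENNReal.ofReal_lt_top).ne
    rw [Measure.restrict_apply' measurableSet_Ioo]
    calc m = volume (Ioo 0 m.toReal) := by
          rw [Real.volume_Ioo, sub_zero, ENNReal.ofReal_toReal hm]
      _ ≤ _ := by
          apply measure_mono
          intro t ht
          have hts : t < s := ht.2.trans_le (ENNReal.toReal_le_of_le_ofReal hs.le h1)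
          refine ⟨?_, ht.1, hts⟩
          have htm : ENNReal.ofReal t < volume {x | l < |f x| ^ q} :=
            ((ENNReal.ofReal_lt_iff_lt_toReal ht.1.le hm).2 ht.2).trans_le h2
          have key : ENNReal.ofReal (l ^ (1/q)) ≤ rearr n f t := by
            apply le_rearr
            intro p hp
            refine htm.trans_le (measure_mono ?_)
            intro x hx
            have hx : l < |f x| ^ q := hx
            refine hp.trans_le (ENNReal.ofReal_le_ofReal ?_)
            calc l ^ (1/q) ≤ (|f x| ^ q) ^ (1/q) := by gcongr
              _ = |f x| := by rw [one_div, Real.rpow_rpow_inv (abs_nonneg _) hq0.ne']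
          have k2 : l ^ (1/q) ≤ (rearr n f t).toReal :=
            (ENNReal.ofReal_le_iff_le_toReal (hT t ht.1)).1 key
          show l ≤ _
          calc l = (l ^ (1/q)) ^ q := by rw [one_div, Real.rpow_inv_rpow hl.le hq0.ne']
            _ ≤ _ := by gcongr

lemma one_le_logFac {s : ℝ} (hs : 0 < s) : 1 ≤ logFac s := by
  unfold logFac
  rw [Real.le_log_iff_exp_le (by positivity)]
  have : 0 < 1 / s := by positivity
  linarith

lemma logFac_anti {s t : ℝ} (hs : 0 < s) (hst : s ≤ t) : logFac t ≤ logFac s := by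
  unfold logFac
  have : 0 < t := hs.trans_le hst
  gcongr

lemma part1 {n : ℕ} {q α : ℝ} (hq : 1 ≤ q) (hα : 0 ≤ α) {f : EuclideanSpace ℝ (Fin n) → ℝ}
    (hf : AEMeasurable f volume) : zygNorm n q α f ≤ zygmundNorm n q α f := by
  unfold zygNorm zygmundNorm
  apply iSup_le
  rintro ⟨s, hs⟩
  have hs : 0 < s := hs
  apply ENNReal.rpow_le_rpow _ (by positivity)
  rw [ENNReal.mul_iSup]
  apply iSup_le
  rintro ⟨E, hE, hEv⟩
  calc ENNReal.ofReal (logFac s) ^ α * ∫⁻ x in E, ENNReal.ofReal (|f x| ^ q)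
      ≤ ENNReal.ofReal (logFac s) ^ α * ∫⁻ t in Ioo 0 s, rearr n f t ^ q := by
        gcongr; exact HL hq hf hs hEv
    _ = ∫⁻ t in Ioo 0 s, ENNReal.ofReal (logFac s) ^ α * rearr n f t ^ q := by
        rw [lintegral_const_mul]
        exact (rearr_antitone n f).measurable.pow_const q
    _ ≤ ∫⁻ t in Ioo 0 s, ENNReal.ofReal (logFac t) ^ α * rearr n f t ^ q := by
        apply setLIntegral_mono' measurableSet_Ioo
        intro t ht
        gcongr
        exact logFac_anti ht.1 ht.2.le
    _ ≤ _ := lintegral_mono_set Ioo_subset_Ioi_self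

lemma exists_sub {n : ℕ} (hn : 1 ≤ n) {s : ℝ} (hs : 0 < s)
    {B : Set (EuclideanSpace ℝ (Fin n))} (hB : MeasurableSet B)
    (h : ENNReal.ofReal s < volume B) :
    ∃ E ⊆ B, MeasurableSet E ∧ volume E = ENNReal.ofReal s := by
  have hU : B = ⋃ N : ℕ, B ∩ Metric.closedBall 0 (N : ℝ) := by
    rw [← inter_iUnion, Metric.iUnion_closedBall_nat, inter_univ]
  have hmono : Monotone fun N : ℕ => B ∩ Metric.closedBall 0 (N : ℝ) := by
    intro a b hab
    exact inter_subset_inter_right _ (Metric.closedBall_subset_closedBall (by exact_mod_cast hab))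
  rw [hU, hmono.measure_iUnion, lt_iSup_iff] at h
  obtain ⟨N, hN⟩ := h
  set φ : ℝ → ℝ := fun r => volume.real (B ∩ Metric.closedBall 0 r) with hφ
  have hfin : ∀ r, volume (B ∩ Metric.closedBall 0 r) ≠ ⊤ := fun r =>
    measure_ne_top_of_subset inter_subset_right (measure_closedBall_lt_top).ne
  set c := volume.real (Metric.ball (0 : EuclideanSpace ℝ (Fin n)) 1)
  have hV : ∀ r, 0 ≤ r → volume.real (Metric.closedBall (0 : EuclideanSpace ℝ (Fin n)) r)
      = r ^ n * c := by
    intro r hr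
    rw [measureReal_def, Measure.addHaar_closedBall _ _ hr, ENNReal.toReal_mul,
      ENNReal.toReal_ofReal (by positivity)]
    simp [c, measureReal_def]
  have hinc : ∀ r1 r2, 0 ≤ r1 → r1 ≤ r2 → φ r1 ≤ φ r2 ∧ φ r2 - φ r1 ≤ r2 ^ n * c - r1 ^ n * c := by
    intro r1 r2 h1 h12
    have hsub := Metric.closedBall_subset_closedBall (x := (0 : EuclideanSpace ℝ (Fin n))) h12
    constructor
    · exact measureReal_mono (inter_subset_inter_right _ hsub) (hfin _)
    · rw [← hV r1 h1, ← hV r2 (h1.trans h12)]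
      rw [← measureReal_sdiff hsub Metric.isClosed_closedBall.measurableSet measure_closedBall_lt_top.ne,
        hφ]
      simp only
      rw [← measureReal_sdiff (inter_subset_inter_right _ hsub)
        (hB.inter Metric.isClosed_closedBall.measurableSet) (hfin _)]
      apply measureReal_mono
      · rintro x ⟨⟨a, b⟩, c⟩
        exact ⟨b, fun h => c ⟨a, h⟩⟩
      · exact measure_ne_top_of_subset sdiff_subset (measure_closedBall_lt_top).ne
  have hcont : ContinuousOn φ (Icc 0 (N : ℝ)) := by
    have hW : ContinuousOn (fun r : ℝ => r ^ n * c) (Icc 0 (N : ℝ)) := by fun_prop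
    rw [Metric.continuousOn_iff] at hW ⊢
    intro b hb ε hε
    obtain ⟨δ, hδ, H⟩ := hW b hb ε hε
    refine ⟨δ, hδ, fun a ha hab => lt_of_le_of_lt ?_ (H a ha hab)⟩
    rw [Real.dist_eq, Real.dist_eq]
    rcases le_total a b with hab | hab
    · have := hinc a b ha.1 hab
      rw [abs_sub_comm, abs_sub_comm (a ^ n * c)]
      exact abs_le_abs_of_nonneg (by linarith) this.2
    · have := hinc b a hb.1 hab
      exact abs_le_abs_of_nonneg (by linarith) this.2
  have h0 : φ 0 = 0 := by
    apply le_antisymm _ measureReal_nonneg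
    have := measureReal_mono (μ := volume) (inter_subset_right : B ∩ Metric.closedBall 0 0 ⊆ _)
      measure_closedBall_lt_top.ne
    rw [hV 0 le_rfl, zero_pow (by omega), zero_mul] at this
    exact this
  have hNs : s ≤ φ N := by
    exact ((ENNReal.ofReal_lt_iff_lt_toReal hs.le (hfin _)).1 hN).le
  obtain ⟨r, hr, hrs⟩ := intermediate_value_Icc (Nat.cast_nonneg N) hcont
    (show s ∈ Icc (φ 0) (φ N) from ⟨by rw [h0]; exact hs.le, hNs⟩)
  refine ⟨B ∩ Metric.closedBall 0 r, inter_subset_left,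
    hB.inter Metric.isClosed_closedBall.measurableSet, ?_⟩
  rw [← hrs]; exact (ENNReal.ofReal_toReal (hfin _)).symm

lemma part2 {n : ℕ} (hn : 1 ≤ n) {q α : ℝ} (hq : 1 ≤ q) {f : EuclideanSpace ℝ (Fin n) → ℝ}
    (hf : AEMeasurable f volume) : weakZygNorm n q α f ≤ zygNorm n q α f := by
  have hq0 : 0 < q := by linarith
  unfold zygNorm weakZygNorm
  apply iSup_mono
  rintro ⟨s, hs⟩
  have hs : 0 < s := hs
  apply ENNReal.rpow_le_rpow _ (by positivity)
  rw [mul_assoc]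
  gcongr
  simp only
  have hs0 : ENNReal.ofReal s ≠ 0 := by simpa using hs
  rw [mul_comm, ← ENNReal.le_div_iff_mul_le (Or.inl hs0) (Or.inl ENNReal.ofReal_ne_top)]
  rw [← ENNReal.le_rpow_inv_iff hq0]
  apply le_of_forall_lt_imp_le_of_dense
  intro l hl
  have hl2 : ENNReal.ofReal s < volume {x | l < ENNReal.ofReal |f x|} := by
    by_contra hcon
    have : rearr n f s ≤ l := sInf_le (not_lt.1 hcon)
    exact absurd this (not_le.2 hl)
  have hnull : NullMeasurableSet {x | l < ENNReal.ofReal |f x|} volume :=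
    nullMeasurableSet_lt aemeasurable_const hf.abs.ennreal_ofReal
  obtain ⟨B, hBs, hB, hBe⟩ := hnull.exists_measurable_subset_ae_eq
  rw [← measure_congr hBe] at hl2
  obtain ⟨E, hEB, hE, hEv⟩ := exists_sub hn hs hB hl2
  rw [ENNReal.le_rpow_inv_iff hq0, ENNReal.le_div_iff_mul_le (Or.inl hs0) (Or.inl ENNReal.ofReal_ne_top)]
  refine le_trans ?_ (le_iSup _ ⟨E, hE, hEv⟩)
  simp only
  rw [← hEv, ← setLIntegral_const]
  apply setLIntegral_mono' hE
  intro x hx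
  have hx : l < ENNReal.ofReal |f x| := hBs (hEB hx)
  rw [← ENNReal.ofReal_rpow_of_nonneg (abs_nonneg _) hq0.le]
  gcongr

lemma constr {n : ℕ} (hn : 1 ≤ n) (v : ℕ → ℝ) (hv1 : ∀ k, v k ≤ 1) :
    ∃ (φ : EuclideanSpace ℝ (Fin n) → ℕ) (W : Set (EuclideanSpace ℝ (Fin n))),
      Measurable φ ∧ MeasurableSet W ∧
      (∀ k, volume (W ∩ φ ⁻¹' {k}) = ENNReal.ofReal (v k)) ∧ ∀ x, (φ x : ℝ) ≤ ‖x‖ := by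
  let i0 : Fin n := ⟨0, hn⟩
  let lo : ℕ → Fin n → ℝ := fun k i => if i = i0 then (k : ℝ) else 0
  let hi : ℕ → Fin n → ℝ := fun k i => if i = i0 then (k : ℝ) + v k else 1
  let A : ℕ → Set (EuclideanSpace ℝ (Fin n)) := fun k =>
    (WithLp.ofLp) ⁻¹' (pi univ fun i => Ico (lo k i) (hi k i))
  have hbox : ∀ k, MeasurableSet (pi univ fun i => Ico (lo k i) (hi k i)) := fun k =>
    MeasurableSet.univ_pi fun i => measurableSet_Ico
  have hA : ∀ k, MeasurableSet (A k) := fun k =>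
    (PiLp.volume_preserving_ofLp (Fin n)).measurable (hbox k)
  have hφ : Measurable (fun x : EuclideanSpace ℝ (Fin n) => ⌊x i0⌋₊) := by
    apply Nat.measurable_floor.comp
    fun_prop
  have hAφ : ∀ k x, x ∈ A k → ⌊x i0⌋₊ = k := by
    intro k x hx
    have := hx i0 (mem_univ _)
    simp only [lo, hi, if_true] at this
    rw [Nat.floor_eq_iff ((Nat.cast_nonneg k).trans this.1)]
    have h1 := hv1 k
    exact ⟨this.1, by linarith [this.2]⟩
  refine ⟨fun x => ⌊x i0⌋₊, ⋃ k, A k, hφ, MeasurableSet.iUnion hA, ?_, ?_⟩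
  · intro k
    have : (⋃ k, A k) ∩ (fun x : EuclideanSpace ℝ (Fin n) => ⌊x i0⌋₊) ⁻¹' {k} = A k := by
      ext x
      constructor
      · rintro ⟨h1, h2⟩
        obtain ⟨j, hj⟩ := mem_iUnion.1 h1
        have h2 : ⌊x i0⌋₊ = k := h2
        rwa [← h2, hAφ j x hj]
      · intro h
        exact ⟨mem_iUnion.2 ⟨k, h⟩, hAφ k x h⟩
    rw [this]
    rw [(PiLp.volume_preserving_ofLp (Fin n)).measure_preimage (hbox k).nullMeasurableSet,
      Real.volume_pi_Ico, Finset.prod_eq_single i0]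
    · simp [lo, hi]
    · intro b _ hb
      simp [lo, hi, hb]
    · simp
  · intro x
    rcases le_total 0 (x i0) with h | h
    · exact (Nat.floor_le h).trans ((le_abs_self _).trans (PiLp.norm_apply_le x i0))
    · simp [Nat.floor_of_nonpos h]

lemma constr2 {n : ℕ} (hn : 1 ≤ n) (v : ℕ → ℝ) (hv1 : ∀ k, v k ≤ 1) (a : ℕ → ℝ) :
    ∃ (f : EuclideanSpace ℝ (Fin n) → ℝ) (A : ℕ → Set (EuclideanSpace ℝ (Fin n))),
      LocallyIntegrable f volume ∧ (∀ k, MeasurableSet (A k)) ∧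
      (∀ k, volume (A k) = ENNReal.ofReal (v k)) ∧
      (Pairwise fun i j => Disjoint (A i) (A j)) ∧
      (∀ k, ∀ x ∈ A k, f x = a k) ∧ (∀ x, (∀ k, x ∉ A k) → f x = 0) := by
  obtain ⟨φ, W, hφ, hW, hvol, hn⟩ := constr hn v hv1
  have hf : Measurable (W.indicator fun x => a (φ x)) :=
    Measurable.indicator ((measurable_from_nat (f := a)).comp hφ) hW
  refine ⟨W.indicator fun x => a (φ x), fun k => W ∩ φ ⁻¹' {k}, ?_, ?_, hvol, ?_, ?_, ?_⟩
  · intro x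
    refine ⟨Metric.ball x 1, Metric.ball_mem_nhds x one_pos, ?_⟩
    apply Measure.integrableOn_of_bounded (M := ∑ k ∈ Finset.range (⌊‖x‖ + 1⌋₊ + 1), |a k|)
      measure_ball_lt_top.ne hf.aestronglyMeasurable
    filter_upwards [ae_restrict_mem measurableSet_ball] with y hy
    rw [Real.norm_eq_abs]
    by_cases hyW : y ∈ W
    · rw [indicator_of_mem hyW]
      apply Finset.single_le_sum (f := fun k => |a k|) (fun i _ => abs_nonneg _)
      rw [Finset.mem_range, Nat.lt_succ_iff]
      apply Nat.le_floor
      refine (hn y).trans ?_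
      have : ‖y - x‖ < 1 := by rwa [mem_ball_iff_norm] at hy
      have := norm_le_norm_add_norm_sub' y x
      linarith
    · rw [indicator_of_notMem hyW, abs_zero]
      positivity
  · intro k
    exact hW.inter (hφ (measurableSet_singleton k))
  · intro i j hij
    rw [Set.disjoint_left]
    rintro x ⟨_, h1⟩ ⟨_, h2⟩
    exact hij ((show φ x = i from h1).symm.trans h2)
  · rintro k x ⟨h1, h2⟩
    rw [indicator_of_mem h1, show φ x = k from h2]
  · intro x hx
    apply indicator_of_notMem
    intro h
    exact hx (φ x) ⟨h, rfl⟩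

lemma int_formula {n : ℕ} {q : ℝ} (hq : 1 ≤ q) {f : EuclideanSpace ℝ (Fin n) → ℝ}
    {A : ℕ → Set (EuclideanSpace ℝ (Fin n))} {F : ℕ → ℝ} (hF : ∀ k, 0 ≤ F k)
    (hA : ∀ k, MeasurableSet (A k)) (hd : Pairwise fun i j => Disjoint (A i) (A j))
    (h1 : ∀ k, ∀ x ∈ A k, f x = F k ^ (1 / q)) (h2 : ∀ x, (∀ k, x ∉ A k) → f x = 0)
    (E : Set (EuclideanSpace ℝ (Fin n))) :
    ∫⁻ x in E, ENNReal.ofReal (|f x| ^ q) = ∑' k, ENNReal.ofReal (F k) * volume (A k ∩ E) := by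
  have hq0 : 0 < q := by linarith
  have : ∀ x, ENNReal.ofReal (|f x| ^ q)
      = ∑' k, (A k).indicator (fun _ => ENNReal.ofReal (F k)) x := by
    intro x
    by_cases hx : ∃ k, x ∈ A k
    · obtain ⟨k, hk⟩ := hx
      rw [tsum_eq_single k, indicator_of_mem hk, h1 k x hk,
        abs_of_nonneg (Real.rpow_nonneg (hF k) _), one_div, Real.rpow_inv_rpow (hF k) hq0.ne']
      intro j hj
      apply indicator_of_notMem
      exact Set.disjoint_left.1 (hd hj.symm) hk
    · push Not at hx
      rw [h2 x hx]
      simp [hx, hq0.ne']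
  simp_rw [this]
  rw [lintegral_tsum (fun k => (measurable_const.indicator (hA k)).aemeasurable)]
  congr 1
  ext k
  rw [lintegral_indicator_const (hA k), Measure.restrict_apply (hA k)]

lemma ex1_real {α : ℝ} (hα : 0 < α) {s : ℝ} (hs : 0 < s) (hs4 : s < 1/4) :
    logFac s ^ α * s ^ (1/2 : ℝ) ≤ (4 * α) ^ α ∧ logFac s ≤ 2 * Real.log (1 / s) := by
  have hL0 : 0 ≤ logFac s := zero_le_one.trans (one_le_logFac hs)
  have hL : logFac s ≤ 2 * Real.log (1 / s) := by
    unfold logFac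
    have : 2 * Real.log (1 / s) = Real.log ((1 / s) ^ 2) := by
      rw [Real.log_pow]; norm_num
    rw [this]
    apply Real.log_le_log (by positivity)
    have h4 : 4 ≤ 1 / s := by
      rw [le_div_iff₀ hs]; linarith
    have := Real.exp_one_lt_d9
    nlinarith
  refine ⟨?_, hL⟩
  have h1 : Real.log (1 / s) ≤ (1 / s) ^ (1 / (2 * α)) / (1 / (2 * α)) :=
    Real.log_le_rpow_div (by positivity) (by positivity)
  have h2 : logFac s ≤ (4 * α) * (1 / s) ^ (1 / (2 * α)) := by
    refine hL.trans ?_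
    rw [div_div_eq_mul_div, div_one] at h1
    linarith
  have h3 : logFac s ^ α ≤ (4 * α) ^ α * (1 / s) ^ (1 / 2 : ℝ) := by
    calc logFac s ^ α ≤ ((4 * α) * (1 / s) ^ (1 / (2 * α))) ^ α := by gcongr
      _ = _ := by
        rw [Real.mul_rpow (by positivity) (by positivity), ← Real.rpow_mul (by positivity)]
        congr 2
        field_simp
  calc logFac s ^ α * s ^ (1/2 : ℝ) ≤ (4 * α) ^ α * (1 / s) ^ (1 / 2 : ℝ) * s ^ (1/2 : ℝ) := by
        gcongr
    _ = (4 * α) ^ α := by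
        rw [mul_assoc, ← Real.mul_rpow (by positivity) hs.le, one_div_mul_cancel hs.ne',
          Real.one_rpow, mul_one]

lemma ex1 {n : ℕ} (hn : 1 ≤ n) {q α : ℝ} (hq : 1 ≤ q) (hα : 0 < α) :
    ∃ f : EuclideanSpace ℝ (Fin n) → ℝ, LocallyIntegrable f volume ∧
        zygNorm n q α f < ⊤ ∧ zygmundNorm n q α f = ⊤ := by
  have hq0 : 0 < q := by linarith
  set r : ℝ := 2 ^ (-α) with hr
  have hr0 : 0 < r := by positivity
  have hr1 : r < 1 := Real.rpow_lt_one_of_one_lt_of_neg (by norm_num) (by linarith)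
  have h2r : ∀ k : ℕ, ((2 : ℝ) ^ k) ^ α * r ^ k = 1 := by
    intro k
    rw [← Real.rpow_natCast, ← Real.rpow_mul (by norm_num), mul_comm (k : ℝ) α,
      Real.rpow_mul (by norm_num), Real.rpow_natCast, ← mul_pow, hr, ← Real.rpow_add (by norm_num)]
    simp
  set v : ℕ → ℝ := fun k => Real.exp (-(2 ^ k)) with hv
  set F : ℕ → ℝ := fun k => Real.exp (2 ^ k) * r ^ k with hFdef
  have hF : ∀ k, 0 ≤ F k := fun k => by positivity
  have hFv : ∀ k, F k * v k = r ^ k := by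
    intro k
    simp only [hFdef, hv]
    rw [mul_right_comm, ← Real.exp_add]; simp
  have hv0 : ∀ k, 0 < v k := fun k => Real.exp_pos _
  have hvhalf : ∀ k, v (k + 1) ≤ v k / 2 := by
    intro k
    have e1 : v (k + 1) = v k * v k := by
      simp only [hv]; rw [← Real.exp_add]; congr 1; ring
    have e2 : v k ≤ 1 / 2 := by
      have h1 : (1 : ℝ) ≤ 2 ^ k := one_le_pow₀ (by norm_num)
      have h2 : Real.exp (-(2 ^ k)) ≤ Real.exp (-1) := by
        apply Real.exp_le_exp.2; linarith
      have := Real.exp_neg_one_lt_d9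
      simp only [hv]; linarith
    rw [e1]
    nlinarith [hv0 k]
  obtain ⟨f, A, hf, hA, hvol, hd, h1, h2⟩ := constr2 hn v
    (fun k => by simp only [hv]; rw [Real.exp_le_one_iff]; simp) (fun k => F k ^ (1/q))
  refine ⟨f, hf, ?_, ?_⟩
  · set G : ℝ≥0∞ := ∑' k : ℕ, ENNReal.ofReal (r ^ k) with hG
    have hGtop : G ≠ ⊤ := by
      rw [hG]
      exact (summable_geometric_of_lt_one hr0.le hr1).tsum_ofReal_ne_top
    set C : ℝ := 2 ^ α + (4 * α) ^ α + 4 ^ α with hC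
    have hfin : (ENNReal.ofReal C * G) ^ (1/q) < ⊤ :=
      ENNReal.rpow_lt_top_of_nonneg (by positivity) (ENNReal.mul_ne_top ENNReal.ofReal_ne_top hGtop)
    refine lt_of_le_of_lt ?_ hfin
    unfold zygNorm
    apply iSup_le
    rintro ⟨s, hs⟩
    have hs : 0 < s := hs
    apply ENNReal.rpow_le_rpow _ (by positivity)
    rw [ENNReal.mul_iSup]
    apply iSup_le
    rintro ⟨E, hE, hEv⟩
    simp only
    rw [int_formula hq hF hA hd h1 h2]
    have hL0 : 0 ≤ logFac s := zero_le_one.trans (one_le_logFac hs)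
    rw [ENNReal.ofReal_rpow_of_nonneg hL0 hα.le]
    have b1 : ∀ k, ENNReal.ofReal (F k) * volume (A k ∩ E) ≤ ENNReal.ofReal (r ^ k) := by
      intro k
      rw [← hFv, ENNReal.ofReal_mul (hF k), ← hvol]
      gcongr
      exact inter_subset_left
    have b2 : ∀ k, ENNReal.ofReal (F k) * volume (A k ∩ E) ≤ ENNReal.ofReal (F k * s) := by
      intro k
      rw [ENNReal.ofReal_mul (hF k), ← hEv]
      gcongr
      exact inter_subset_right
    have p1 : 0 ≤ (4 * α) ^ α := by positivity
    have p2 : (0:ℝ) ≤ 4 ^ α := by positivity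
    have p3 : (0:ℝ) ≤ 2 ^ α := by positivity
    rcases le_or_gt (1/4) s with hs4 | hs4
    · have : ∑' k, ENNReal.ofReal (F k) * volume (A k ∩ E) ≤ G := ENNReal.tsum_le_tsum b1
      gcongr
      have hL2 : logFac s ≤ 2 := by
        refine (logFac_anti (by norm_num) hs4).trans ?_
        unfold logFac
        rw [Real.log_le_iff_le_exp (by positivity)]
        have e1 := Real.exp_one_lt_d9
        have e2 := Real.exp_one_gt_d9
        have : Real.exp 2 = Real.exp 1 * Real.exp 1 := by rw [← Real.exp_add]; norm_num
        rw [this]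
        nlinarith
      calc logFac s ^ α ≤ 2 ^ α := by gcongr
        _ ≤ C := by rw [hC]; linarith
    · obtain ⟨c1, c2⟩ := ex1_real hα hs hs4
      have hex : ∃ m : ℕ, Real.log (1/s) / 2 ≤ 2 ^ m := by
        obtain ⟨m, hm⟩ := pow_unbounded_of_one_lt (Real.log (1/s) / 2) (one_lt_two)
        exact ⟨m, hm.le⟩
      classical
      set m := Nat.find hex with hm
      have hm1 : Real.log (1/s) / 2 ≤ 2 ^ m := Nat.find_spec hex
      have hm2 : ∀ k < m, (2:ℝ) ^ k ≤ Real.log (1/s) / 2 := fun k hk =>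
        (not_le.1 (Nat.find_min hex hk)).le
      have hsum : ∑' k, ENNReal.ofReal (F k) * volume (A k ∩ E)
          ≤ ENNReal.ofReal (s ^ (1/2:ℝ)) * G + ENNReal.ofReal (r ^ m) * G := by
        rw [← ENNReal.summable.sum_add_tsum_nat_add' (k := m)]
        apply add_le_add
        · rw [hG, ← ENNReal.tsum_mul_left]
          refine le_trans (Finset.sum_le_sum ?_) (ENNReal.sum_le_tsum (Finset.range m))
          intro k hk
          refine (b2 k).trans ?_
          rw [← ENNReal.ofReal_mul (by positivity)]
          apply ENNReal.ofReal_le_ofReal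
          simp only [hFdef]
          have := hm2 k (Finset.mem_range.1 hk)
          have e : Real.exp (2 ^ k) * s ≤ s ^ (1/2:ℝ) := by
            calc Real.exp (2 ^ k) * s ≤ Real.exp (Real.log (1/s) / 2) * s := by gcongr
              _ = s ^ (1/2:ℝ) := by
                nth_rewrite 2 [← Real.exp_log hs]
                rw [← Real.exp_add, Real.rpow_def_of_pos hs, one_div, Real.log_inv]
                congr 1; ring
          calc Real.exp (2 ^ k) * r ^ k * s = (Real.exp (2 ^ k) * s) * r ^ k := by ring
            _ ≤ _ := by gcongr
        · rw [hG, ← ENNReal.tsum_mul_left]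
          apply ENNReal.tsum_le_tsum
          intro k
          refine (b1 _).trans ?_
          rw [← ENNReal.ofReal_mul (by positivity), pow_add, mul_comm]
      refine (mul_le_mul_right hsum _).trans ?_
      rw [← add_mul, ← mul_assoc, ← ENNReal.ofReal_add (by positivity) (by positivity),
        ← ENNReal.ofReal_mul (by positivity)]
      gcongr
      rw [mul_add]
      have : logFac s ^ α * r ^ m ≤ 4 ^ α := by
        calc logFac s ^ α * r ^ m ≤ (4 * 2 ^ m) ^ α * r ^ m := by
              gcongr; linarith
          _ = 4 ^ α := by
              rw [Real.mul_rpow (by norm_num) (by positivity), mul_assoc, h2r, mul_one]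
      rw [hC]; linarith
  · unfold zygmundNorm
    have hvanti : Antitone v := antitone_nat_of_succ_le fun k => by
      linarith [hvhalf k, hv0 k]
    have : ∫⁻ s in Set.Ioi (0 : ℝ), ENNReal.ofReal (logFac s) ^ α * rearr n f s ^ q = ⊤ := by
      rw [eq_top_iff]
      calc (⊤ : ℝ≥0∞) = ∑' k : ℕ, ENNReal.ofReal (1/2) :=
            (ENNReal.tsum_const_eq_top_of_ne_zero (by simp)).symm
        _ ≤ ∑' k : ℕ, ∫⁻ s in Ico (v (k+1)) (v k),
              ENNReal.ofReal (logFac s) ^ α * rearr n f s ^ q := by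
            apply ENNReal.tsum_le_tsum
            intro k
            calc ENNReal.ofReal (1/2) ≤ ENNReal.ofReal ((((2:ℝ)^k)^α * F k) * (v k - v (k+1))) := by
                  apply ENNReal.ofReal_le_ofReal
                  calc (1/2 : ℝ) = (((2:ℝ)^k)^α * (F k * v k)) / 2 := by rw [hFv, h2r]
                    _ = (((2:ℝ)^k)^α * F k) * (v k / 2) := by ring
                    _ ≤ _ := by
                      have := hF k
                      gcongr
                      linarith [hvhalf k]
              _ = ∫⁻ s in Ico (v (k+1)) (v k), ENNReal.ofReal (((2:ℝ)^k)^α * F k) := by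
                  have := hF k
                  rw [setLIntegral_const, Real.volume_Ico, ENNReal.ofReal_mul (by positivity)]
              _ ≤ _ := by
                  apply setLIntegral_mono' measurableSet_Ico
                  intro t ht
                  have ht0 : 0 < t := (hv0 _).trans_le ht.1
                  have hFk := hF k
                  rw [ENNReal.ofReal_mul (by positivity)]
                  apply mul_le_mul'
                  · rw [← ENNReal.ofReal_rpow_of_nonneg (by positivity) hα.le]
                    gcongr
                    unfold logFac
                    rw [Real.le_log_iff_exp_le (by positivity)]
                    have : Real.exp (2 ^ k) ≤ 1 / t := by
                      rw [le_div_iff₀ ht0]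
                      calc Real.exp (2^k) * t ≤ Real.exp (2^k) * v k := by
                            gcongr; exact ht.2.le
                        _ = 1 := by simp only [hv]; rw [← Real.exp_add]; simp
                    have := Real.exp_pos 1
                    linarith
                  · have : ENNReal.ofReal (F k ^ (1/q)) ≤ rearr n f t := by
                      apply le_rearr
                      intro l hl
                      calc ENNReal.ofReal t < ENNReal.ofReal (v k) :=
                            (ENNReal.ofReal_lt_ofReal_iff (hv0 k)).2 ht.2
                        _ = volume (A k) := (hvol k).symm
                        _ ≤ _ := by
                          apply measure_mono
                          intro x hx
                          show l < _
                          rw [h1 k x hx, abs_of_nonneg (by positivity)]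
                          exact hl
                    calc ENNReal.ofReal (F k) = ENNReal.ofReal (F k ^ (1/q)) ^ q := by
                          rw [ENNReal.ofReal_rpow_of_nonneg (by positivity) hq0.le, one_div,
                            Real.rpow_inv_rpow hFk hq0.ne']
                      _ ≤ _ := by gcongr
        _ = ∫⁻ s in ⋃ k, Ico (v (k+1)) (v k), ENNReal.ofReal (logFac s) ^ α * rearr n f s ^ q := by
            rw [lintegral_iUnion (fun k => measurableSet_Ico)]
            exact hvanti.pairwise_disjoint_on_Ico_succ
        _ ≤ _ := by
            apply lintegral_mono_set
            apply iUnion_subset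
            intro k t ht
            exact (hv0 _).trans_le ht.1
    rw [this, ENNReal.top_rpow_of_pos (by positivity)]

lemma ex2_real {α : ℝ} (hα : 0 < α) : ∃ C : ℝ, 0 < C ∧ ∀ k m : ℕ, k ≤ m →
    (2:ℝ) ^ k * ((k:ℝ) + 1) ^ (-α) ≤ C * ((2:ℝ) ^ m * ((m:ℝ) + 1) ^ (-α)) := by
  have hl2 : 0 < Real.log 2 := Real.log_pos (by norm_num)
  refine ⟨2 * (α / Real.log 2) ^ α, by positivity, ?_⟩
  have key : ∀ j : ℕ, ((j:ℝ) + 1) ^ α ≤ 2 * (α / Real.log 2) ^ α * 2 ^ j := by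
    intro j
    have h := Real.log_le_rpow_div (x := (2:ℝ) ^ (j+1)) (ε := 1/α) (by positivity) (by positivity)
    rw [Real.log_pow, div_div_eq_mul_div, div_one] at h
    have h' : (j:ℝ) + 1 ≤ (α / Real.log 2) * ((2:ℝ) ^ (j+1)) ^ (1/α) := by
      rw [div_mul_eq_mul_div, le_div_iff₀ hl2]
      push_cast at h
      linarith
    calc ((j:ℝ) + 1) ^ α ≤ ((α / Real.log 2) * ((2:ℝ) ^ (j+1)) ^ (1/α)) ^ α := by gcongr
      _ = _ := by
        rw [Real.mul_rpow (by positivity) (by positivity), one_div,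
          Real.rpow_inv_rpow (by positivity) hα.ne']
        ring
  intro k m hkm
  obtain ⟨j, rfl⟩ := Nat.exists_eq_add_of_le hkm
  rw [Real.rpow_neg (by positivity), Real.rpow_neg (by positivity), ← div_eq_mul_inv,
    ← div_eq_mul_inv, mul_div_assoc', div_le_div_iff₀ (by positivity) (by positivity)]
  calc (2:ℝ) ^ k * (((k + j : ℕ):ℝ) + 1) ^ α ≤ (2:ℝ) ^ k * (((k:ℝ) + 1) * ((j:ℝ) + 1)) ^ α := by
        gcongr
        push_cast
        nlinarith [mul_nonneg (Nat.cast_nonneg (α := ℝ) k) (Nat.cast_nonneg (α := ℝ) j)]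
    _ = (2:ℝ) ^ k * ((k:ℝ) + 1) ^ α * ((j:ℝ) + 1) ^ α := by
        rw [Real.mul_rpow (by positivity) (by positivity)]; ring
    _ ≤ (2:ℝ) ^ k * ((k:ℝ) + 1) ^ α * (2 * (α / Real.log 2) ^ α * 2 ^ j) := by
        gcongr; exact key j
    _ = _ := by rw [pow_add]; ring

lemma ex2 {n : ℕ} (hn : 1 ≤ n) {q α : ℝ} (hq : 1 ≤ q) (hα : 0 < α) :
    ∃ g : EuclideanSpace ℝ (Fin n) → ℝ, LocallyIntegrable g volume ∧
        weakZygNorm n q α g < ⊤ ∧ zygNorm n q α g = ⊤ := by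
  have hq0 : 0 < q := by linarith
  have hl2 : 0 < Real.log 2 := Real.log_pos (by norm_num)
  set F : ℕ → ℝ := fun k => (2:ℝ) ^ k * ((k:ℝ) + 1) ^ (-α) with hFdef
  have hF : ∀ k, 0 ≤ F k := fun k => by positivity
  obtain ⟨f, A, hf, hA, hvol, hd, h1, h2⟩ := constr2 hn (fun k => (1/2 : ℝ) ^ (k+1))
    (fun k => pow_le_one₀ (by norm_num) (by norm_num)) (fun k => F k ^ (1/q))
  have htail : ∀ m, volume (⋃ k, A (k + m)) ≤ ENNReal.ofReal ((1/2)^m) := by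
    intro m
    refine (measure_iUnion_le _).trans ?_
    simp_rw [hvol]
    have hs : HasSum (fun k : ℕ => (1/2 : ℝ) ^ (k + m + 1)) ((1/2)^m) := by
      have := (hasSum_geometric_two).mul_left ((1/2 : ℝ)^(m+1))
      have e1 : (1/2 : ℝ)^(m+1) * 2 = (1/2)^m := by rw [pow_succ]; ring
      have e2 : (fun k : ℕ => (1/2 : ℝ) ^ (k + m + 1))
          = fun i : ℕ => (1/2 : ℝ)^(m+1) * (1/2)^i := by
        funext k; rw [← pow_add]; congr 1; omega
      rw [e2, ← e1]; exact this
    rw [← ENNReal.ofReal_tsum_of_nonneg (fun k => by positivity) hs.summable, hs.tsum_eq]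
  have hlarge : ∀ (C : ℝ) (m : ℕ), (∀ k < m, F k ≤ C) → ∀ s, (1/2:ℝ)^m ≤ s →
      rearr n f s ≤ ENNReal.ofReal (C ^ (1/q)) := by
    intro C m hC s hs
    apply sInf_le
    show volume _ ≤ _
    refine le_trans (measure_mono ?_) ((htail m).trans (ENNReal.ofReal_le_ofReal hs))
    intro x hx
    have hx : ENNReal.ofReal (C ^ (1/q)) < ENNReal.ofReal |f x| := hx
    have hx' := lt_of_not_ge fun h => absurd hx (not_lt.2 (ENNReal.ofReal_le_ofReal h))
    by_cases hk : ∃ k, x ∈ A k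
    · obtain ⟨k, hk⟩ := hk
      have hFk := hF k
      rw [h1 k x hk, abs_of_nonneg (by positivity)] at hx'
      have hkm : m ≤ k := by
        by_contra hlt
        have hle := hC k (not_le.1 hlt)
        have : F k ^ (1/q) ≤ C ^ (1/q) := by gcongr
        linarith
      refine mem_iUnion.2 ⟨k - m, ?_⟩
      rwa [Nat.sub_add_cancel hkm]
    · push Not at hk
      rw [h2 x hk] at hx
      simp at hx
  refine ⟨f, hf, ?_, ?_⟩
  · obtain ⟨C, hC, hCF⟩ := ex2_real hα
    have hfin : (ENNReal.ofReal (2 ^ α * C)) ^ (1/q) < ⊤ :=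
      ENNReal.rpow_lt_top_of_nonneg (by positivity) ENNReal.ofReal_ne_top
    refine lt_of_le_of_lt ?_ hfin
    unfold weakZygNorm
    apply iSup_le
    rintro ⟨s, hs⟩
    have hs : 0 < s := hs
    apply ENNReal.rpow_le_rpow _ (by positivity)
    simp only
    rcases le_or_gt 1 s with hs1 | hs1
    · have := hlarge 0 0 (by simp) s (by simpa using hs1)
      rw [Real.zero_rpow (by positivity), ENNReal.ofReal_zero, nonpos_iff_eq_zero] at this
      rw [this, ENNReal.zero_rpow_of_pos hq0, mul_zero]
      exact zero_le
    · obtain ⟨m, hm1, hm2⟩ := exists_nat_pow_near_of_lt_one hs hs1.le (y := (1/2:ℝ)) (by norm_num) (by norm_num)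
      have hr := hlarge (C * F m) (m+1) (fun k hk => hCF k m (by omega)) s hm1.le
      have hFm := hF m
      have hL0 : 0 ≤ logFac s := zero_le_one.trans (one_le_logFac hs)
      have hr' : rearr n f s ^ q ≤ ENNReal.ofReal (C * F m) := by
        calc rearr n f s ^ q ≤ ENNReal.ofReal ((C * F m) ^ (1/q)) ^ q := by gcongr
          _ = _ := by
            rw [ENNReal.ofReal_rpow_of_nonneg (by positivity) hq0.le, one_div,
                            Real.rpow_inv_rpow (by positivity) hq0.ne']
      have hL : logFac s ≤ 2 * ((m:ℝ) + 1) := by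
        have e1 := Real.exp_one_gt_d9
        have h1s : 1 / s ≤ 2 ^ (m+1) := by
          rw [div_le_iff₀ hs]
          calc (1:ℝ) = 2 ^ (m+1) * (1/2)^(m+1) := by rw [← mul_pow]; norm_num
            _ ≤ _ := by gcongr
        have h2m : (1:ℝ) ≤ 2 ^ m := one_le_pow₀ (by norm_num)
        have hp : (2:ℝ) ^ (m+1) = 2 * 2 ^ m := by ring
        have : logFac s ≤ Real.log (Real.exp 1 * 2 ^ (m+1)) := by
          unfold logFac
          apply Real.log_le_log (by positivity)
          rw [hp] at h1s ⊢
          nlinarith [mul_nonneg (show 0 ≤ Real.exp 1 - 1 by linarith) (sub_nonneg.2 h2m)]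
        rw [Real.log_mul (by positivity) (by positivity), Real.log_exp, Real.log_pow] at this
        have hlt := Real.log_two_lt_d9
        push_cast at this
        have : (m + 1 : ℝ) * Real.log 2 ≤ (m + 1 : ℝ) * 1 := by gcongr; linarith
        linarith [Nat.cast_nonneg (α := ℝ) m]
      calc ENNReal.ofReal (logFac s) ^ α * ENNReal.ofReal s * rearr n f s ^ q
          ≤ ENNReal.ofReal (logFac s) ^ α * ENNReal.ofReal s * ENNReal.ofReal (C * F m) := by gcongr
        _ = ENNReal.ofReal (logFac s ^ α * s * (C * F m)) := by
            rw [ENNReal.ofReal_rpow_of_nonneg hL0 hα.le, ← ENNReal.ofReal_mul (by positivity),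
              ← ENNReal.ofReal_mul (by positivity)]
        _ ≤ _ := by
            apply ENNReal.ofReal_le_ofReal
            calc logFac s ^ α * s * (C * F m)
                ≤ (2 * ((m:ℝ) + 1)) ^ α * (1/2)^m * (C * F m) := by gcongr
              _ = 2 ^ α * C * ((1/2)^m * 2^m) * (((m:ℝ) + 1)^α * ((m:ℝ) + 1)^(-α)) := by
                  rw [Real.mul_rpow (by norm_num) (by positivity)]; simp only [hFdef]; ring
              _ = 2 ^ α * C := by
                  rw [← mul_pow, ← Real.rpow_add (by positivity)]; simp
  · have hbd : ∀ m : ℕ, 1 ≤ m →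
        ENNReal.ofReal (m * ((Real.log 2 / 2) ^ α / 2)) ≤ zygNorm n q α f ^ q := by
      intro m hm
      set E := ⋃ k ∈ Finset.Ico m (2*m), A k with hEdef
      have hE : MeasurableSet E := Finset.measurableSet_biUnion _ fun k _ => hA k
      have hEv : volume E ≤ ENNReal.ofReal ((1/2)^m) := by
        refine le_trans (measure_mono ?_) (htail m)
        intro x hx
        simp only [hEdef, mem_iUnion] at hx ⊢
        obtain ⟨k, hk, hxk⟩ := hx
        refine ⟨k - m, ?_⟩
        rwa [Nat.sub_add_cancel (Finset.mem_Ico.1 hk).1]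
      have hEtop : volume E ≠ ⊤ := (hEv.trans_lt ENNReal.ofReal_lt_top).ne
      have hAE : ∀ k ∈ Finset.Ico m (2*m), A k ⊆ E := fun k hk x hx =>
        mem_iUnion₂.2 ⟨k, hk, hx⟩
      have hE0 : volume E ≠ 0 := by
        intro h0
        have := measure_mono_null (hAE m (Finset.mem_Ico.2 ⟨le_rfl, by omega⟩)) h0
        rw [hvol] at this
        simp at this
      set s := (volume E).toReal with hs
      have hs0 : 0 < s := ENNReal.toReal_pos hE0 hEtop
      have hsm : s ≤ (1/2)^m := ENNReal.toReal_le_of_le_ofReal (by positivity) hEv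
      have hL : m * Real.log 2 ≤ logFac s := by
        unfold logFac
        rw [← Real.log_pow]
        apply Real.log_le_log (by positivity)
        have : (2:ℝ)^m ≤ 1 / s := by
          rw [le_div_iff₀ hs0]
          calc (2:ℝ)^m * s ≤ 2^m * (1/2)^m := by gcongr
            _ = 1 := by rw [← mul_pow]; norm_num
        have := Real.exp_pos 1
        linarith
      have hL0 : 0 ≤ logFac s := zero_le_one.trans (one_le_logFac hs0)
      have hint : ENNReal.ofReal (m * ((2 * m : ℝ) ^ (-α) / 2))
          ≤ ∫⁻ x in E, ENNReal.ofReal (|f x| ^ q) := by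
        rw [int_formula hq hF hA hd h1 h2]
        refine le_trans ?_ (ENNReal.sum_le_tsum (Finset.Ico m (2*m)))
        calc ENNReal.ofReal (m * ((2 * m : ℝ) ^ (-α) / 2))
            = ∑ k ∈ Finset.Ico m (2*m), ENNReal.ofReal ((2 * m : ℝ) ^ (-α) / 2) := by
              rw [Finset.sum_const, Nat.card_Ico, ENNReal.ofReal_mul (by positivity), nsmul_eq_mul,
                ENNReal.ofReal_natCast]
              congr 2; omega
          _ ≤ _ := by
              apply Finset.sum_le_sum
              intro k hk
              rw [inter_eq_left.2 (hAE k hk), hvol, ← ENNReal.ofReal_mul (hF k)]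
              apply ENNReal.ofReal_le_ofReal
              have e : F k * (1/2)^(k+1) = ((k:ℝ)+1)^(-α) / 2 := by
                have : (2:ℝ)^k * (1/2)^k = 1 := by rw [← mul_pow]; norm_num
                simp only [hFdef]
                calc _ = ((2:ℝ)^k * (1/2)^k) * (((k:ℝ)+1)^(-α) / 2) := by ring
                  _ = _ := by rw [this, one_mul]
              rw [e]
              gcongr ?_ / 2
              apply Real.rpow_le_rpow_of_nonpos (by positivity) _ (by linarith)
              have := (Finset.mem_Ico.1 hk).2
              exact_mod_cast this
      have hz : (ENNReal.ofReal (logFac s) ^ α * ∫⁻ x in E, ENNReal.ofReal (|f x| ^ q)) ^ (1/q)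
          ≤ zygNorm n q α f := by
        unfold zygNorm
        refine le_trans ?_ (le_iSup _ ⟨s, hs0⟩)
        gcongr
        exact le_iSup (fun E : {E : Set (EuclideanSpace ℝ (Fin n)) //
          MeasurableSet E ∧ volume E = ENNReal.ofReal s} =>
            ∫⁻ x in E.1, ENNReal.ofReal (|f x| ^ q)) ⟨E, hE, (ENNReal.ofReal_toReal hEtop).symm⟩
      rw [one_div, ENNReal.rpow_inv_le_iff hq0] at hz
      refine le_trans ?_ hz
      refine le_trans ?_ (mul_le_mul_right hint _)
      rw [ENNReal.ofReal_rpow_of_nonneg hL0 hα.le, ← ENNReal.ofReal_mul (by positivity)]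
      apply ENNReal.ofReal_le_ofReal
      have hm0 : (0:ℝ) < m := by exact_mod_cast hm
      calc m * ((Real.log 2 / 2) ^ α / 2)
          = (m * Real.log 2) ^ α * (m * ((2 * m : ℝ) ^ (-α) / 2)) := by
            rw [Real.rpow_neg (by positivity), Real.div_rpow (by positivity) (by positivity),
              Real.mul_rpow (by positivity) (by positivity),
              Real.mul_rpow (by positivity) (by positivity)]
            field_simp
        _ ≤ _ := by gcongr
    have htop : zygNorm n q α f ^ q = ⊤ := by
      by_contra hne
      set c := (Real.log 2 / 2) ^ α / 2 with hc
      have hc0 : 0 < c := by positivity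
      obtain ⟨m, hm⟩ := exists_nat_gt ((zygNorm n q α f ^ q).toReal / c)
      have h := hbd (m+1) (by omega)
      have h' := (ENNReal.ofReal_le_iff_le_toReal hne).1 h
      rw [div_lt_iff₀ hc0] at hm
      push_cast at h'
      nlinarith
    exact (ENNReal.rpow_eq_top_iff_of_pos hq0).1 htop


theorem stmt16 (n : ℕ) (hn : 1 ≤ n) (q α : ℝ) (hq : 1 ≤ q) (hα : 0 ≤ α) :
    (∀ f : EuclideanSpace ℝ (Fin n) → ℝ, LocallyIntegrable f volume →
      zygNorm n q α f ≤ zygmundNorm n q α f) ∧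
    (∀ f : EuclideanSpace ℝ (Fin n) → ℝ, LocallyIntegrable f volume →
      weakZygNorm n q α f ≤ zygNorm n q α f) ∧
    (0 < α →
      (∃ f : EuclideanSpace ℝ (Fin n) → ℝ, LocallyIntegrable f volume ∧
        zygNorm n q α f < ⊤ ∧ zygmundNorm n q α f = ⊤) ∧
      (∃ g : EuclideanSpace ℝ (Fin n) → ℝ, LocallyIntegrable g volume ∧
        weakZygNorm n q α g < ⊤ ∧ zygNorm n q α g = ⊤)) := by
  refine ⟨fun f hf => part1 hq hα hf.aestronglyMeasurable.aemeasurable,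
    fun f hf => part2 hn hq hf.aestronglyMeasurable.aemeasurable,
    fun h => ⟨ex1 hn hq h, ex2 hn hq h⟩⟩
end
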